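/- For α > 0 and N ≫ 1, sup over ℓ ∈ Z^∞_* with |ℓ|_α < N of ∏_i (1 + ⟨i⟩^5 |ℓ_i|^5) is at most (1+N)^{C(α) N^{1/(1+α)}} for some constant C(α) > 0. -/

import Mathlib

open scoped BigOperators

noncomputable def wnorm (α : ℝ) (ℓ : ℕ →₀ ℤ) : ℝ :=
  ∑ i ∈ ℓ.support, ((i : ℝ) + 1) ^ α * |(ℓ i : ℝ)|

/-! Every factor of the product is at most a fixed power of `1 + N`, because both `⟨i⟩ = i + 1` and
`|ℓ_i|` are at most powers of `N`. So it suffices to bound the size of the support by a multiple of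
`T = N ^ (1 / (1 + α))`: at most `T` of its indices satisfy `⟨i⟩ ≤ T`, and each of the others
contributes at least `T ^ α` to `|ℓ|_α`, so there are at most `N / T ^ α = T` of them. -/

section CountingIndices

open Finset

variable {R : Type*} [Semiring R] [LinearOrder R]

lemma card_filter_mul_le_sum [IsOrderedRing R] {ι : Type*} (s : Finset ι) {f : ι → R}
    (hf : ∀ i ∈ s, 0 ≤ f i) (c : R) : #{i ∈ s | c ≤ f i} * c ≤ ∑ i ∈ s, f i :=
  calc #{i ∈ s | c ≤ f i} * c
      ≤ ∑ i ∈ s with c ≤ f i, f i := by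
        rw [← nsmul_eq_mul]
        exact card_nsmul_le_sum _ _ _ fun i hi ↦ (mem_filter.1 hi).2
    _ ≤ ∑ i ∈ s, f i :=
        sum_le_sum_of_subset_of_nonneg (filter_subset _ _) fun i hi _ ↦ hf i hi

lemma card_filter_cast_add_one_le [IsStrictOrderedRing R] [FloorSemiring R] (s : Finset ℕ) {T : R}
    (hT : 0 ≤ T) : (#{i ∈ s | ((i : ℕ) : R) + 1 ≤ T} : R) ≤ T := by
  have hsub : {i ∈ s | ((i : ℕ) : R) + 1 ≤ T} ⊆ range ⌊T⌋₊ := fun i hi ↦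
    mem_range.2 <| Nat.le_floor <| by exact_mod_cast (mem_filter.1 hi).2
  have hcard : #{i ∈ s | ((i : ℕ) : R) + 1 ≤ T} ≤ ⌊T⌋₊ := by
    simpa only [card_range] using card_le_card hsub
  exact (Nat.cast_le.2 hcard).trans (Nat.floor_le hT)

lemma card_le_add_sum_rpow_div {α T : ℝ} (hα : 0 ≤ α) (hT : 0 < T) (s : Finset ℕ) :
    (#s : ℝ) ≤ T + (∑ i ∈ s, ((i : ℝ) + 1) ^ α) / T ^ α := by
  have hsmall : (#{i ∈ s | ((i : ℕ) : ℝ) + 1 ≤ T} : ℝ) ≤ T := card_filter_cast_add_one_le s hT.le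
  have hsub : {i ∈ s | ¬ ((i : ℕ) : ℝ) + 1 ≤ T} ⊆ {i ∈ s | T ^ α ≤ (((i : ℕ) : ℝ) + 1) ^ α} :=
    monotone_filter_right s fun i _ hi ↦ Real.rpow_le_rpow hT.le (not_le.1 hi).le hα
  have hlarge : (#{i ∈ s | ¬ ((i : ℕ) : ℝ) + 1 ≤ T} : ℝ) ≤ (∑ i ∈ s, ((i : ℝ) + 1) ^ α) / T ^ α :=
    (Nat.cast_le.2 (card_le_card hsub)).trans <| (le_div_iff₀ (by positivity)).2 <|
      card_filter_mul_le_sum s (fun i _ ↦ by positivity) _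
  rw [← card_filter_add_card_filter_not (s := s) (fun i : ℕ ↦ (i : ℝ) + 1 ≤ T), Nat.cast_add]
  exact add_le_add hsmall hlarge

lemma card_le_two_mul_sum_rpow {α : ℝ} (hα : 0 ≤ α) (s : Finset ℕ) :
    (#s : ℝ) ≤ 2 * (∑ i ∈ s, ((i : ℝ) + 1) ^ α) ^ (1 / (1 + α)) := by
  obtain rfl | hs := s.eq_empty_or_nonempty
  · rw [card_empty, Nat.cast_zero]
    positivity
  set S := ∑ i ∈ s, ((i : ℝ) + 1) ^ α
  have hS : 0 < S := sum_pos (fun i _ ↦ by positivity) hs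
  set T := S ^ (1 / (1 + α))
  have hT : 0 < T := by positivity
  have hTS : T * T ^ α = S := by
    rw [← Real.rpow_one_add' hT.le (by positivity), ← Real.rpow_mul hS.le,
      one_div_mul_cancel (by positivity), Real.rpow_one]
  calc (#s : ℝ) ≤ T + S / T ^ α := card_le_add_sum_rpow_div hα hT s
    _ = 2 * T := by rw [← hTS, mul_div_cancel_right₀ _ (by positivity), two_mul]

end CountingIndices

lemma mul_le_rpow_of_rpow_mul_le {α x m N : ℝ} (hα : 0 < α) (hx : 1 ≤ x) (hm : 1 ≤ m)
    (h : x ^ α * m ≤ N) : x * m ≤ N ^ (1 + α⁻¹) := by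
  have hm_le : m ≤ N := (le_mul_of_one_le_left (by positivity) (Real.one_le_rpow hx hα.le)).trans h
  have hN : 0 < N := by linarith
  have hx_le : x ≤ N ^ α⁻¹ := (Real.le_rpow_inv_iff_of_pos (by positivity) hN.le hα).2 <|
    (le_mul_of_one_le_right (by positivity) hm).trans h
  calc x * m ≤ N ^ α⁻¹ * N := by gcongr
    _ = N ^ (1 + α⁻¹) := by rw [Real.rpow_one_add' hN.le (by positivity), mul_comm]

lemma one_add_pow_le_rpow_of_le_rpow {y N q : ℝ} (hy : 0 ≤ y) (hN : 0 ≤ N) (hq : 1 ≤ q)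
    (h : y ≤ N ^ q) {p : ℕ} (hp : p ≠ 0) : 1 + y ^ p ≤ (1 + N) ^ (q * p) :=
  calc 1 + y ^ p ≤ (1 + y) ^ p := by simpa only [one_pow] using pow_add_pow_le zero_le_one hy hp
    _ ≤ (1 + N ^ q) ^ p := by gcongr
    _ ≤ ((1 + N) ^ q) ^ p := by
        gcongr
        simpa only [Real.one_rpow] using Real.add_rpow_le_rpow_add zero_le_one hN hq
    _ = (1 + N) ^ (q * p) := (Real.rpow_mul_natCast (by positivity) q p).symm

section WeightedNorm

variable {α N : ℝ} {ℓ : ℕ →₀ ℤ} {i : ℕ}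

lemma wnorm_nonneg (α : ℝ) (ℓ : ℕ →₀ ℤ) : 0 ≤ wnorm α ℓ :=
  Finset.sum_nonneg fun i _ ↦ by positivity

lemma one_le_abs_cast_of_mem_support (hi : i ∈ ℓ.support) : 1 ≤ |(ℓ i : ℝ)| := by
  exact_mod_cast Int.one_le_abs (Finsupp.mem_support_iff.1 hi)

lemma rpow_mul_abs_le_wnorm (α : ℝ) (hi : i ∈ ℓ.support) :
    ((i : ℝ) + 1) ^ α * |(ℓ i : ℝ)| ≤ wnorm α ℓ :=
  Finset.single_le_sum (f := fun i : ℕ ↦ ((i : ℝ) + 1) ^ α * |(ℓ i : ℝ)|)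
    (fun i _ ↦ by positivity) hi

lemma sum_support_rpow_le_wnorm (α : ℝ) (ℓ : ℕ →₀ ℤ) :
    ∑ i ∈ ℓ.support, ((i : ℝ) + 1) ^ α ≤ wnorm α ℓ :=
  Finset.sum_le_sum fun _ hi ↦
    le_mul_of_one_le_right (by positivity) (one_le_abs_cast_of_mem_support hi)

lemma card_support_le_of_wnorm_le (hα : 0 ≤ α) (hN : wnorm α ℓ ≤ N) :
    (ℓ.support.card : ℝ) ≤ 2 * N ^ (1 / (1 + α)) :=
  (card_le_two_mul_sum_rpow hα ℓ.support).trans <| by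
    gcongr
    exact (sum_support_rpow_le_wnorm α ℓ).trans hN

lemma one_add_pow_mul_abs_pow_le_of_wnorm_le (hα : 0 < α) (hN : wnorm α ℓ ≤ N)
    (hi : i ∈ ℓ.support) {p : ℕ} (hp : p ≠ 0) :
    1 + ((i : ℝ) + 1) ^ p * |(ℓ i : ℝ)| ^ p ≤ (1 + N) ^ ((1 + α⁻¹) * p) := by
  have hmul : ((i : ℝ) + 1) * |(ℓ i : ℝ)| ≤ N ^ (1 + α⁻¹) :=
    mul_le_rpow_of_rpow_mul_le hα (le_add_of_nonneg_left i.cast_nonneg)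
      (one_le_abs_cast_of_mem_support hi) ((rpow_mul_abs_le_wnorm α hi).trans hN)
  rw [← mul_pow]
  exact one_add_pow_le_rpow_of_le_rpow (by positivity) ((wnorm_nonneg α ℓ).trans hN)
    (le_add_of_nonneg_right (by positivity)) hmul hp

end WeightedNorm

theorem sup_prod_truncated_bound_general {α : ℝ} (hα : 0 < α) {p : ℕ} (hp : p ≠ 0) {N : ℝ}
    {ℓ : ℕ →₀ ℤ} (hN : wnorm α ℓ ≤ N) :
    ∏ i ∈ ℓ.support, (1 + ((i : ℝ) + 1) ^ p * |(ℓ i : ℝ)| ^ p) ≤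
      (1 + N) ^ ((1 + α⁻¹) * p * 2 * N ^ (1 / (1 + α))) := by
  have hN₀ : 0 ≤ N := (wnorm_nonneg α ℓ).trans hN
  calc ∏ i ∈ ℓ.support, (1 + ((i : ℝ) + 1) ^ p * |(ℓ i : ℝ)| ^ p)
      ≤ ∏ _i ∈ ℓ.support, (1 + N) ^ ((1 + α⁻¹) * p) :=
        Finset.prod_le_prod (fun i _ ↦ by positivity) fun i hi ↦
          one_add_pow_mul_abs_pow_le_of_wnorm_le hα hN hi hp
    _ = ((1 + N) ^ ((1 + α⁻¹) * p)) ^ ℓ.support.card := Finset.prod_const _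
    _ = (1 + N) ^ ((1 + α⁻¹) * p * ℓ.support.card) :=
        (Real.rpow_mul_natCast (by positivity) _ _).symm
    _ ≤ (1 + N) ^ ((1 + α⁻¹) * p * 2 * N ^ (1 / (1 + α))) := by
        rw [mul_assoc _ 2]
        gcongr
        · exact le_add_of_nonneg_right hN₀
        · exact card_support_le_of_wnorm_le hα.le hN

/-- for α > 0 and N ≫ 1,
`sup_{|ℓ|_α < N} ∏_i (1 + ⟨i⟩⁵|ℓ_i|⁵) ≤ (1+N)^{C(α) N^{1/(1+α)}}`. -/
theorem sup_prod_truncated_bound (α : ℝ) (hα : 0 < α) :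
    ∃ C > (0 : ℝ), ∃ N₀ : ℝ, ∀ N : ℝ, N₀ ≤ N → ∀ ℓ : ℕ →₀ ℤ,
      wnorm α ℓ < N →
      ∏ i ∈ ℓ.support, (1 + ((i : ℝ) + 1) ^ 5 * |(ℓ i : ℝ)| ^ 5) ≤
        (1 + N) ^ (C * N ^ ((1 : ℝ) / (1 + α))) :=
  ⟨(1 + α⁻¹) * (5 : ℕ) * 2, by positivity, 0, fun _ _ _ hℓ ↦
    sup_prod_truncated_bound_general hα (by norm_num) hℓ.le⟩
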